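/- Let d > 6 and let G be a connected d-regular graph on n vertices such that G² is not complete. Let 𝒰 := {u ∈ V(G) : deg₂(u) ≥ d − 2}. If |𝒰| ≥ 3n/(d−3), then ∑_{v ∈ V(G)} deg₂(v) ≥ 4n; consequently e(G²) − e(G) ≥ 2n. -/

import Mathlib

open SimpleGraph

variable {V : Type*}

/-- The set of vertices at distance exactly `i` from `v`. -/
def distSet (G : SimpleGraph V) (v : V) (i : ℕ) : Set V := {u | G.dist v u = i}

/-- `deg₂ v` : the number of vertices at distance exactly 2 from `v`. -/
noncomputable def deg2 (G : SimpleGraph V) (v : V) : ℕ := (distSet G v 2).ncard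

/-- `N₂'(v)` : vertices at distance 2 from `v` that are adjacent to a vertex at
distance 3 from `v`. -/
def N2' (G : SimpleGraph V) (v : V) : Set V :=
  {u | G.dist v u = 2 ∧ ∃ w, G.dist v w = 3 ∧ G.Adj u w}

/-- The square of `G` : an edge between `u` and `v` whenever `1 ≤ d(u,v) ≤ 2`. -/
def graphSquare (G : SimpleGraph V) : SimpleGraph V where
  Adj u v := 1 ≤ G.dist u v ∧ G.dist u v ≤ 2
  symm := by
    constructor
    intro u v h
    rwa [SimpleGraph.dist_comm]
  loopless := by
    constructor
    intro v h
    simp [SimpleGraph.dist_self] at h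

/-- `G` is `d`-regular : every vertex has exactly `d` neighbors. -/
def IsRegularGraph (G : SimpleGraph V) (d : ℕ) : Prop :=
  ∀ v, (G.neighborSet v).ncard = d

/-- The vertex set of the connected component of `G - u` containing `v` :
all vertices reachable from `v` by a walk avoiding `u`. -/
def compDel (G : SimpleGraph V) (u v : V) : Set V :=
  {w | ∃ p : G.Walk v w, u ∉ p.support}

/-! A connected regular graph with a vertex adjacent to all others is complete, so here every vertex
has some vertex at distance two, that is `deg₂ ≥ 1` everywhere. On `𝒰` this bound is exceeded by at
least `d - 3`, so `∑ v, deg₂ v ≥ n + |𝒰| (d - 3) ≥ 4n`. A vertex `v` has degree `deg v + deg₂ v` in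
the square, so by the degree-sum formula `∑ v, deg₂ v` is twice the number of edges gained. -/

theorem card_nsmul_add_card_filter_nsmul_le_sum {ι M : Type*} [AddCommMonoid M] [PartialOrder M]
    [IsOrderedAddMonoid M] (s : Finset ι) (f : ι → M) (a b : M)
    [DecidablePred fun i ↦ a + b ≤ f i] (hf : ∀ i ∈ s, a ≤ f i) :
    s.card • a + {i ∈ s | a + b ≤ f i}.card • b ≤ ∑ i ∈ s, f i :=
  calc s.card • a + {i ∈ s | a + b ≤ f i}.card • b
      = ∑ i ∈ s, (a + if a + b ≤ f i then b else 0) := by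
        rw [Finset.sum_add_distrib, ← Finset.sum_filter, Finset.sum_const, Finset.sum_const]
    _ ≤ ∑ i ∈ s, f i := Finset.sum_le_sum fun i hi ↦ by
        split_ifs with hi'
        · exact hi'
        · simpa only [add_zero] using hf i hi

section

variable {G : SimpleGraph V} {d : ℕ} {v w : V}

theorem distSet_nonempty_of_le_dist (hvw : G.Reachable v w) {i : ℕ} (hi : i ≤ G.dist v w) :
    (distSet G v i).Nonempty := by
  obtain ⟨p, hp⟩ := hvw.exists_walk_length_eq_dist
  have hdist : (p.take i).length = G.dist v (p.getVert i) :=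
    length_eq_dist_of_subwalk hp (p.isSubwalk_take i)
  have hlength : (p.take i).length = i := by
    rw [Walk.take_length, min_eq_left (hi.trans_eq hp.symm)]
  exact ⟨p.getVert i, hdist.symm.trans hlength⟩

theorem deg2_pos_of_not_adj [Finite V] (hvw : G.Reachable v w) (hne : v ≠ w) (hadj : ¬G.Adj v w) :
    0 < deg2 G v :=
  (Set.ncard_pos (Set.toFinite _)).2 <|
    distSet_nonempty_of_le_dist hvw (hvw.one_lt_dist_of_ne_of_not_adj hne hadj)

theorem IsRegularGraph.eq_top_of_isUniversal [Finite V] (hreg : IsRegularGraph G d)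
    (hv : G.IsUniversal v) : G = ⊤ := by
  refine eq_top_iff_forall_isUniversal.2 fun w ↦ .of_neighborSet_eq ?_
  refine Set.eq_of_subset_of_ncard_le (fun u hu ↦ hu.ne') ?_ (Set.toFinite _)
  calc ({w}ᶜ : Set V).ncard = ({v}ᶜ : Set V).ncard := by
        rw [Set.ncard_compl, Set.ncard_compl, Set.ncard_singleton, Set.ncard_singleton]
    _ = (G.neighborSet v).ncard := by rw [hv.neighborSet_eq]
    _ ≤ (G.neighborSet w).ncard := by rw [hreg v, hreg w]

theorem IsRegularGraph.deg2_pos [Finite V] (hreg : IsRegularGraph G d) (hconn : G.Connected)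
    (hG : G ≠ ⊤) (v : V) : 0 < deg2 G v := by
  obtain ⟨w, hne, hadj⟩ : ∃ w, v ≠ w ∧ ¬G.Adj v w := by
    by_contra! hv
    exact hG (hreg.eq_top_of_isUniversal hv)
  exact deg2_pos_of_not_adj (hconn v w) hne hadj

variable (G)

theorem le_graphSquare : G ≤ graphSquare G := fun v w hvw ↦ by
  have hdist : G.dist v w = 1 := dist_eq_one_iff_adj.2 hvw
  exact ⟨hdist.ge, hdist.trans_le one_le_two⟩

theorem neighborSet_graphSquare (v : V) :
    (graphSquare G).neighborSet v = G.neighborSet v ∪ distSet G v 2 := by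
  ext w
  change 1 ≤ G.dist v w ∧ G.dist v w ≤ 2 ↔ G.Adj v w ∨ G.dist v w = 2
  rw [← dist_eq_one_iff_adj]
  lia

theorem disjoint_neighborSet_distSet (v : V) {i : ℕ} (hi : i ≠ 1) :
    Disjoint (G.neighborSet v) (distSet G v i) :=
  Set.disjoint_left.2 fun _ hadj hdist ↦ hi (hdist.symm.trans (dist_eq_one_iff_adj.2 hadj))

theorem ncard_neighborSet_graphSquare [Finite V] (v : V) :
    ((graphSquare G).neighborSet v).ncard = (G.neighborSet v).ncard + deg2 G v := by
  rw [neighborSet_graphSquare,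
    Set.ncard_union_eq (disjoint_neighborSet_distSet G v (OfNat.ofNat_ne_one 2)), deg2]

variable [Fintype V]

theorem sum_ncard_neighborSet : ∑ v, (G.neighborSet v).ncard = 2 * G.edgeSet.ncard := by
  classical
  simpa only [Set.ncard_eq_toFinset_card', Set.toFinset_card, card_neighborSet_eq_degree,
    edgeFinset] using G.sum_degrees_eq_twice_card_edges

theorem two_mul_ncard_edgeSet_graphSquare :
    2 * (graphSquare G).edgeSet.ncard = 2 * G.edgeSet.ncard + ∑ v, deg2 G v := by
  simp only [← sum_ncard_neighborSet, ncard_neighborSet_graphSquare, Finset.sum_add_distrib]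

variable {G}

theorem card_add_mul_ncard_le_sum_deg2 (hpos : ∀ v, 0 < deg2 G v) (k : ℕ) :
    Fintype.card V + {v | 1 + k ≤ deg2 G v}.ncard * k ≤ ∑ v, deg2 G v := by
  simpa only [smul_eq_mul, mul_one, Finset.card_univ, Set.ncard_eq_toFinset_card',
    Set.toFinset_ofPred] using
    card_nsmul_add_card_filter_nsmul_le_sum Finset.univ (deg2 G) 1 k fun v _ ↦ hpos v

theorem stmt6_general (hd : 3 < d) (hpos : ∀ v, 0 < deg2 G v)
    (hU : 3 * (Fintype.card V : ℝ) / ((d : ℝ) - 3) ≤ ({u | d - 2 ≤ deg2 G u}.ncard : ℝ)) :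
    4 * Fintype.card V ≤ ∑ v, deg2 G v ∧
      2 * Fintype.card V + G.edgeSet.ncard ≤ (graphSquare G).edgeSet.ncard := by
  obtain ⟨k, rfl⟩ : ∃ k, d = k + 3 := Nat.exists_eq_add_of_le' hd.le
  have hk : (0 : ℝ) < k := by exact_mod_cast (by lia : 0 < k)
  have hmany : 3 * Fintype.card V ≤ {v | 1 + k ≤ deg2 G v}.ncard * k := by
    rw [show k + 3 - 2 = 1 + k by lia, Nat.cast_add, Nat.cast_ofNat, add_sub_cancel_right,
      div_le_iff₀ hk] at hU
    exact_mod_cast hU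
  have hsum : 4 * Fintype.card V ≤ ∑ v, deg2 G v := by
    have := card_add_mul_ncard_le_sum_deg2 hpos k
    lia
  have hsquare := two_mul_ncard_edgeSet_graphSquare G
  exact ⟨hsum, by lia⟩

end

/-- Let `d > 6` and `G` connected `d`-regular on `n` vertices with `G²`
not complete, and let `U = {u : deg₂(u) ≥ d - 2}`. If `|U| ≥ 3n/(d-3)` then
`∑_v deg₂(v) ≥ 4n`, and consequently `e(G²) - e(G) ≥ 2n`. -/
theorem stmt6 {V : Type*} [Fintype V] (G : SimpleGraph V) (d n : ℕ)
    (hn : n = Fintype.card V) (hd : 6 < d)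
    (hconn : G.Connected) (hreg : IsRegularGraph G d) (hnotcomplete : graphSquare G ≠ ⊤)
    (hU : 3 * (n : ℝ) / ((d : ℝ) - 3) ≤ (({u : V | d - 2 ≤ deg2 G u}).ncard : ℝ)) :
    (4 * n ≤ ∑ v : V, deg2 G v) ∧
      (2 * n + G.edgeSet.ncard ≤ (graphSquare G).edgeSet.ncard) := by
  subst hn
  exact stmt6_general (by lia)
    (hreg.deg2_pos hconn (ne_top_of_le_ne_top hnotcomplete (le_graphSquare G))) hU
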